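/- Let $w\in A_2$ on $\mathbb{R}^d$, $d\mu = w^{-1}dx$, $d\nu = w\,dx$. For cubes $I\subset\hat I$ define $\mathcal{P}_I(\chi_{\hat I\setminus I}d\mu) := \int_{\hat I\setminus I} \frac{\ell(I)^{\epsilon}}{(\ell(I)+|c(I)-x|)^{d+\epsilon}}d\mu(x)$, where $c(I)$ is the center and $\ell(I)$ the side length of $I$. Then for any cube $I$ and any collection of pairwise disjoint open subcubes $\{I_\alpha\}$ of $I$: $\sum_\alpha [\mathcal{P}_{I_\alpha}(\chi_{I\setminus I_\alpha}d\mu)]^2 \nu(I_\alpha) \le c\,[w]_{A_2}^2\,\mu(I)$, with $c$ depending only on $d$ and $\epsilon$. -/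

import Mathlib

/-!
Let `I` be the large cube, `μ = w⁻¹ dx` and `ν = w dx`. The pivotal quantity of `I_α` is at most a
constant times the supremum `M_α` of the averages of `χ_I μ` over the dyadic dilates of `I_α`
(`pivP_le_iSup`), so it suffices to bound `∑ M_α² ν(I_α)`. The quadratic dependence on the `A₂`
constant `Q` comes from Lerner's argument for Buckley's theorem: for a ball `B` centred at
`x ∈ I_α`, of radius comparable to at most the side of `I`, the `A₂` condition gives
`μ(B) / |B| ≤ Q |B| / ν(B)`, and `|B|` is comparable to `|B ∩ I| = ∫_B χ_I w⁻¹ dν`. Hence `M_α` is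
at most a constant times `Q` times the centred maximal function, with respect to `ν`, of
`χ_I w⁻¹`, at every point of `I_α` (`local_estimate`).

That maximal function is bounded on `L²(ν)` with a constant depending only on `d`, whatever `ν` is:
the Besicovitch covering theorem gives the weak type `(1, 1)` bound (`besicovitch_weak`), and
interpolation the `L²` bound (`strong_type`). Finally `∫_I (w⁻¹)² dν = μ(I)`.

The norm on `Fin d → ℝ` is the supremum norm, so that balls are cubes.
-/


open MeasureTheory Set
open scoped ENNReal
noncomputable section

/-- Points of `ℝ^d`. -/
abbrev Rd (d : ℕ) := Fin d → ℝ

/-- The (closed, axis-parallel) cube with lower-left corner `a` and side length `ℓ`. -/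
def cube {d : ℕ} (a : Rd d) (ℓ : ℝ) : Set (Rd d) := {x | ∀ i, a i ≤ x i ∧ x i ≤ a i + ℓ}

/-- The open axis-parallel cube with lower-left corner `a` and side length `ℓ`. -/
def openCube {d : ℕ} (a : Rd d) (ℓ : ℝ) : Set (Rd d) := {x | ∀ i, a i < x i ∧ x i < a i + ℓ}

/-- The average `⟨w⟩_I = |I|⁻¹ ∫_I w` of `w` over the cube with corner `a`, side `ℓ`. -/
def cubeAvg {d : ℕ} (w : Rd d → ℝ) (a : Rd d) (ℓ : ℝ) : ℝ :=
  (∫ x in cube a ℓ, w x) / ℓ ^ d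

/-- The pivotal quantity `𝒫_I (χ_S dμ) = ∫_S ℓ(I)^ε / (ℓ(I)+|c(I)-x|)^{d+ε} dμ(x)`,
for the cube `I` with corner `a` and side `ℓ` (center `c(I) = a + ℓ/2`). -/
def pivP {d : ℕ} (ε : ℝ) (μ : Measure (Rd d)) (a : Rd d) (ℓ : ℝ) (S : Set (Rd d)) : ℝ≥0∞ :=
  ∫⁻ x in S, ENNReal.ofReal (ℓ ^ ε / (ℓ + ‖(fun i => a i + ℓ / 2) - x‖) ^ ((d : ℝ) + ε)) ∂μ

/-! ### The centred maximal function of a measure -/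

/-- Weak type `(1, 1)` bound for the centred maximal function of an arbitrary measure `ν`: the
Besicovitch theorem covers `E` by `N` disjoint families of the given balls, and each family
contributes at most `∫ F dν`. -/
lemma besicovitch_weak {d N : ℕ} {τ : ℝ} (hτ : 1 < τ)
    (hN : IsEmpty (Besicovitch.SatelliteConfig (Rd d) N τ)) (ν : Measure (Rd d))
    (F : Rd d → ℝ≥0∞) (E : Set (Rd d)) (R : ℝ) (t : ℝ≥0∞)
    (h : ∀ x ∈ E, ∃ r, 0 < r ∧ r ≤ R ∧
      t * ν (Metric.closedBall x r) ≤ ∫⁻ y in Metric.closedBall x r, F y ∂ν) :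
    t * ν E ≤ N * ∫⁻ y, F y ∂ν := by
  rcases E.eq_empty_or_nonempty with rfl | hE
  · simp
  have : Nonempty E := hE.to_subtype
  choose r hr0 hrR hr using fun x : E => h x.1 x.2
  let q : Besicovitch.BallPackage E (Rd d) :=
    { c := fun x => x.1, r := r, rpos := hr0, r_bound := R, r_le := hrR }
  obtain ⟨s, hs, hcov⟩ := Besicovitch.exist_disjoint_covering_families hτ hN q
  have hcount : ∀ i, (s i).Countable := fun i =>
    (hs i).countable_of_nonempty_interior fun j _ =>
      ⟨q.c j, Metric.ball_subset_interior_closedBall (Metric.mem_ball_self (hr0 j))⟩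
  have hcov' : E ⊆ ⋃ i : Fin N, ⋃ j ∈ s i, Metric.closedBall (q.c j) (r j) := by
    intro x hx
    have := hcov ⟨⟨x, hx⟩, rfl⟩
    simp only [mem_iUnion] at this ⊢
    obtain ⟨i, j, hj, hxj⟩ := this
    exact ⟨i, j, hj, Metric.ball_subset_closedBall hxj⟩
  calc t * ν E ≤ t * ∑ i : Fin N, ν (⋃ j ∈ s i, Metric.closedBall (q.c j) (r j)) := by
        gcongr
        refine (measure_mono hcov').trans ?_
        simpa using measure_iUnion_le (μ := ν)
          (fun i : Fin N => ⋃ j ∈ s i, Metric.closedBall (q.c j) (r j))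
    _ = ∑ i : Fin N, t * ν (⋃ j ∈ s i, Metric.closedBall (q.c j) (r j)) := Finset.mul_sum _ _ _
    _ ≤ ∑ i : Fin N, ∫⁻ y, F y ∂ν := by
        refine Finset.sum_le_sum fun i _ => ?_
        calc t * ν (⋃ j ∈ s i, Metric.closedBall (q.c j) (r j))
            ≤ t * ∑' j : s i, ν (Metric.closedBall (q.c j) (r j)) := by
              gcongr
              exact measure_biUnion_le ν (hcount i) _
          _ = ∑' j : s i, t * ν (Metric.closedBall (q.c j) (r j)) := ENNReal.tsum_mul_left.symm
          _ ≤ ∑' j : s i, ∫⁻ y in Metric.closedBall (q.c j) (r j), F y ∂ν :=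
              ENNReal.tsum_le_tsum fun j => hr j
          _ = ∫⁻ y in ⋃ j ∈ s i, Metric.closedBall (q.c j) (r j), F y ∂ν :=
              (lintegral_biUnion (hcount i) (fun j _ => Metric.isClosed_closedBall.measurableSet)
                (hs i) _).symm
          _ ≤ ∫⁻ y, F y ∂ν := setLIntegral_le_lintegral _ _
    _ = N * ∫⁻ y, F y ∂ν := by simp

lemma sq_eq_lintegral_layer (p : ℝ) (hp : 0 ≤ p) :
    ENNReal.ofReal p ^ 2 =
      ∫⁻ t in Ioi (0 : ℝ), ENNReal.ofReal (2 * t) * (Iio p).indicator 1 t := by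
  have h1 : ∫ t in (0 : ℝ)..p, 2 * t = p ^ 2 := by
    rw [intervalIntegral.integral_const_mul, integral_id]; ring
  have h2 : ∫⁻ t in Ioi (0 : ℝ), ENNReal.ofReal (2 * t) * (Iio p).indicator 1 t
      = ∫⁻ t in Ioo (0 : ℝ) p, ENNReal.ofReal (2 * t) := by
    rw [← Ioi_inter_Iio, inter_comm, ← Measure.restrict_restrict measurableSet_Iio,
      ← lintegral_indicator measurableSet_Iio]
    refine lintegral_congr fun t => ?_
    by_cases ht : t ∈ Iio p <;> simp [ht]
  rw [h2, restrict_Ioo_eq_restrict_Ioc, ← ofReal_integral_eq_lintegral_ofReal,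
    ← intervalIntegral.integral_of_le hp, h1, ENNReal.ofReal_pow hp]
  · exact (Continuous.intervalIntegrable (by fun_prop) 0 p).1
  · filter_upwards [ae_restrict_mem measurableSet_Ioc] with t ht
    simpa using ht.1.le

/-- Strong type `(2, 2)` bound for the centred maximal function of `ν`, in linearised form: the
step function `∑ p i χ_{A i}` is below that maximal function, since every level `t < p i` is
attained at every point of `A i` by the `ν`-average of `F` over some centred ball. It follows from
`besicovitch_weak` by Marcinkiewicz interpolation with the trivial `L^∞` bound. -/
lemma strong_type {d N : ℕ} {τ : ℝ} (hτ : 1 < τ)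
    (hN : IsEmpty (Besicovitch.SatelliteConfig (Rd d) N τ)) (ν : Measure (Rd d)) [SFinite ν]
    (hν : ∀ x r, ν (Metric.closedBall x r) ≠ ∞)
    (F : Rd d → ℝ≥0∞) (hF : Measurable F) {ι : Type} (s : Finset ι) (A : ι → Set (Rd d))
    (hA : ∀ i, MeasurableSet (A i)) (hdisj : Pairwise fun i j => Disjoint (A i) (A j))
    (p : ι → ℝ) (hp : ∀ i, 0 ≤ p i) (R : ℝ)
    (h : ∀ i, ∀ t, 0 < t → t < p i → ∀ x ∈ A i, ∃ r, 0 < r ∧ r ≤ R ∧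
      ENNReal.ofReal t * ν (Metric.closedBall x r) ≤ ∫⁻ y in Metric.closedBall x r, F y ∂ν) :
    ∑ i ∈ s, ENNReal.ofReal (p i) ^ 2 * ν (A i) ≤ 8 * N * ∫⁻ y, F y ^ 2 ∂ν := by
  classical
  -- The part of `F` above height `t / 2`.
  let G : ℝ → Rd d → ℝ≥0∞ := fun t y => if ENNReal.ofReal (t / 2) < F y then F y else 0
  have hGm : Measurable (Function.uncurry G) := by
    refine Measurable.ite (measurableSet_lt (by fun_prop) (by fun_prop)) (by fun_prop)
      measurable_const
  have hG : ∀ t y, F y ≤ G t y + ENNReal.ofReal (t / 2) := by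
    intro t y
    by_cases hy : ENNReal.ofReal (t / 2) < F y
    · simp [G, hy]
    · simpa [G, hy] using not_lt.1 hy
  have hweak : ∀ t, 0 < t →
      ENNReal.ofReal (2 * t) * ∑ i ∈ s, (Iio (p i)).indicator 1 t * ν (A i)
        ≤ 4 * N * ∫⁻ y, G t y ∂ν := by
    intro t ht
    have hsum : ∑ i ∈ s, (Iio (p i)).indicator 1 t * ν (A i)
        = ν (⋃ i ∈ s.filter (fun i => t < p i), A i) := by
      rw [measure_biUnion_finset (fun i _ j _ hij => hdisj hij) (fun i _ => hA i),
        Finset.sum_filter]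
      refine Finset.sum_congr rfl fun i _ => ?_
      by_cases hi : t < p i <;> simp [hi]
    have hw := besicovitch_weak hτ hN ν (G t) (⋃ i ∈ s.filter (fun i => t < p i), A i) R
      (ENNReal.ofReal (t / 2)) (by
        intro x hx
        simp only [mem_iUnion, Finset.mem_filter] at hx
        obtain ⟨i, ⟨_, hti⟩, hxi⟩ := hx
        obtain ⟨r, hr0, hrR, hr⟩ := h i t ht hti x hxi
        refine ⟨r, hr0, hrR, ?_⟩
        -- Below height `t / 2`, `F` contributes at most half of `t * ν B`; subtract it.
        have h1 : ENNReal.ofReal (t / 2) * ν (Metric.closedBall x r)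
            + ENNReal.ofReal (t / 2) * ν (Metric.closedBall x r)
            ≤ (∫⁻ y in Metric.closedBall x r, G t y ∂ν)
              + ENNReal.ofReal (t / 2) * ν (Metric.closedBall x r) := by
          rw [← add_mul, ← ENNReal.ofReal_add (by positivity) (by positivity), add_halves]
          refine hr.trans ((lintegral_mono fun y => hG t y).trans ?_)
          rw [lintegral_add_right _ measurable_const]
          simp
        exact (ENNReal.add_le_add_iff_right
          (ENNReal.mul_ne_top ENNReal.ofReal_ne_top (hν x r))).1 h1)
    rw [hsum]
    have h4 : ENNReal.ofReal (2 * t) = 4 * ENNReal.ofReal (t / 2) := by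
      rw [show (4 : ℝ≥0∞) = ENNReal.ofReal 4 by simp, ← ENNReal.ofReal_mul (by norm_num)]
      congr 1; ring
    rw [h4, mul_assoc, mul_assoc]
    gcongr
  have hind : ∀ i, Measurable fun t : ℝ => (Iio (p i)).indicator (1 : ℝ → ℝ≥0∞) t :=
    fun i => measurable_one.indicator measurableSet_Iio
  calc ∑ i ∈ s, ENNReal.ofReal (p i) ^ 2 * ν (A i)
      = ∑ i ∈ s, ∫⁻ t in Ioi (0 : ℝ),
          ENNReal.ofReal (2 * t) * ((Iio (p i)).indicator 1 t * ν (A i)) := by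
        refine Finset.sum_congr rfl fun i _ => ?_
        have := hind i
        rw [sq_eq_lintegral_layer _ (hp i), ← lintegral_mul_const _ (by fun_prop)]
        simp only [mul_assoc]
    _ = ∫⁻ t in Ioi (0 : ℝ),
          ENNReal.ofReal (2 * t) * ∑ i ∈ s, (Iio (p i)).indicator 1 t * ν (A i) := by
        rw [← lintegral_finsetSum]
        · simp only [Finset.mul_sum]
        · intro i _
          have := hind i
          fun_prop
    _ ≤ ∫⁻ t in Ioi (0 : ℝ), 4 * N * ∫⁻ y, G t y ∂ν :=
        setLIntegral_mono' measurableSet_Ioi fun t ht => hweak t ht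
    _ = 4 * N * ∫⁻ y, (∫⁻ t in Ioi (0 : ℝ), G t y) ∂ν := by
        rw [lintegral_const_mul' _ _ (ENNReal.mul_ne_top (by simp) (by simp)),
          lintegral_lintegral_swap hGm.aemeasurable]
    _ ≤ 4 * N * ∫⁻ y, 2 * F y ^ 2 ∂ν := by
        refine mul_le_mul_right (lintegral_mono fun y => ?_) _
        change ∫⁻ t in Ioi (0 : ℝ), G t y ≤ 2 * F y ^ 2
        rcases eq_or_ne (F y) ∞ with hy | hy
        · simp [hy]
        calc ∫⁻ t in Ioi (0 : ℝ), G t y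
            ≤ ∫⁻ t in Ioi (0 : ℝ), (Ioo 0 (2 * (F y).toReal)).indicator (fun _ => F y) t := by
              refine setLIntegral_mono' measurableSet_Ioi fun t ht => ?_
              by_cases h1 : ENNReal.ofReal (t / 2) < F y
              · have h2 : t ∈ Ioo 0 (2 * (F y).toReal) := by
                  refine ⟨ht, ?_⟩
                  have := (ENNReal.ofReal_lt_iff_lt_toReal (half_pos ht).le hy).1 h1
                  linarith
                rw [indicator_of_mem h2]
                simp [G, h1]
              · simp [G, h1]
          _ ≤ ∫⁻ t, (Ioo 0 (2 * (F y).toReal)).indicator (fun _ => F y) t :=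
              setLIntegral_le_lintegral _ _
          _ = 2 * F y ^ 2 := by
              rw [lintegral_indicator measurableSet_Ioo, lintegral_const]
              simp only [Measure.restrict_apply_univ, Real.volume_Ioo, sub_zero]
              rw [ENNReal.ofReal_mul (by norm_num), ENNReal.ofReal_toReal hy]
              simp; ring
    _ = 8 * N * ∫⁻ y, F y ^ 2 ∂ν := by
        rw [lintegral_const_mul' _ _ (by simp)]; ring

/-! ### Cubes and the pivotal kernel -/

lemma cube_eq_Icc {d : ℕ} (a : Rd d) (ℓ : ℝ) : cube a ℓ = Icc a (fun i => a i + ℓ) := by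
  ext x; simp [cube, Pi.le_def, forall_and]

lemma isOpen_openCube {d : ℕ} (a : Rd d) (ℓ : ℝ) : IsOpen (openCube a ℓ) := by
  have : openCube a ℓ = univ.pi fun i => Ioo (a i) (a i + ℓ) := by
    ext x; simp [openCube]
  rw [this]
  exact isOpen_set_pi finite_univ fun i _ => isOpen_Ioo

lemma closedBall_eq_cube {d : ℕ} (x : Rd d) {r : ℝ} (hr : 0 ≤ r) :
    Metric.closedBall x r = cube (fun i => x i - r) (2 * r) := by
  rw [closedBall_pi x hr, cube_eq_Icc, ← pi_univ_Icc]
  congr 1; ext i y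
  simp only [Real.closedBall_eq_Icc]
  rw [show x i - r + 2 * r = x i + r by ring]

/-- Bound for the pivotal kernel at distance comparable to `z = 2 ^ k * ℓ`; `y` stands for
`ℓ + |c - x|`. -/
lemma kernel_le {d : ℕ} {ε ℓ y z : ℝ} (hε : 0 < ε) (hℓ : 0 < ℓ) (k : ℕ) (hz : z = 2 ^ k * ℓ)
    (hy : z / 2 ≤ y) :
    ℓ ^ ε / y ^ ((d : ℝ) + ε) ≤ 2 ^ ((d : ℝ) + ε) * ((2 : ℝ) ^ (-ε)) ^ k / z ^ d := by
  have hz0 : 0 < z := by rw [hz]; positivity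
  calc ℓ ^ ε / y ^ ((d : ℝ) + ε) ≤ ℓ ^ ε / (z / 2) ^ ((d : ℝ) + ε) := by gcongr
    _ = 2 ^ ((d : ℝ) + ε) * ((2 : ℝ) ^ (-ε)) ^ k / z ^ d := by
      rw [Real.div_rpow hz0.le (by norm_num), Real.rpow_add hz0, Real.rpow_natCast]
      have h1 : z ^ ε = (((2 : ℝ) ^ (-ε)) ^ k)⁻¹ * ℓ ^ ε := by
        rw [hz, Real.mul_rpow (by positivity) hℓ.le, Real.rpow_neg (by norm_num), inv_pow, inv_inv,
          ← Real.rpow_natCast, ← Real.rpow_natCast, ← Real.rpow_mul (by norm_num),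
          ← Real.rpow_mul (by norm_num), mul_comm (k : ℝ) ε]
      rw [h1]
      have : 0 < ℓ ^ ε := by positivity
      have : 0 < (2 : ℝ) ^ (-ε) := by positivity
      field_simp

/-- The constant `∑ₖ 2 ^ (d + ε) 2 ^ (-kε)`. -/
def dyadicConst (d : ℕ) (ε : ℝ) : ℝ := 2 ^ ((d : ℝ) + ε) / (1 - 2 ^ (-ε))

lemma two_rpow_neg_lt_one {ε : ℝ} (hε : 0 < ε) : (2 : ℝ) ^ (-ε) < 1 :=
  Real.rpow_lt_one_of_one_lt_of_neg (by norm_num) (by linarith)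

lemma dyadicConst_pos {d : ℕ} {ε : ℝ} (hε : 0 < ε) : 0 < dyadicConst d ε :=
  div_pos (by positivity) (sub_pos.2 (two_rpow_neg_lt_one hε))

/-- The pivotal quantity is a Poisson-like average, hence dominated by the largest average of
`μ` on `S` over the dyadic dilates of the cube. -/
lemma pivP_le_iSup {d : ℕ} {ε : ℝ} (hε : 0 < ε) (μ : Measure (Rd d)) (a : Rd d) {ℓ : ℝ}
    (hℓ : 0 < ℓ) (S : Set (Rd d)) :
    pivP ε μ a ℓ S ≤ ENNReal.ofReal (dyadicConst d ε) *
      ⨆ k : ℕ, μ (Metric.closedBall (fun i => a i + ℓ / 2) (2 ^ k * ℓ) ∩ S)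
        / ENNReal.ofReal ((2 ^ k * ℓ) ^ d) := by
  set c : Rd d := fun i => a i + ℓ / 2 with hc
  set q : ℕ → ℝ := fun k => 2 ^ ((d : ℝ) + ε) * ((2 : ℝ) ^ (-ε)) ^ k with hq
  have hq0 : ∀ k, 0 ≤ q k := fun k => by positivity
  have hρ := two_rpow_neg_lt_one hε
  have hρ0 : (0 : ℝ) ≤ 2 ^ (-ε) := by positivity
  have hpt : ∀ x, ENNReal.ofReal (ℓ ^ ε / (ℓ + ‖c - x‖) ^ ((d : ℝ) + ε)) ≤
      ∑' k : ℕ, (Metric.closedBall c (2 ^ k * ℓ)).indicator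
        (fun _ => ENNReal.ofReal (q k) / ENNReal.ofReal ((2 ^ k * ℓ) ^ d)) x := by
    intro x
    -- The term of index `k + 1` suffices, where `2 ^ k ≤ (ℓ + ‖c - x‖) / ℓ < 2 ^ (k + 1)`.
    obtain ⟨k, hk1, hk2⟩ := exists_nat_pow_near (x := (ℓ + ‖c - x‖) / ℓ) (y := 2)
      (by rw [le_div_iff₀ hℓ]; linarith [norm_nonneg (c - x)]) (by norm_num)
    rw [le_div_iff₀ hℓ] at hk1
    rw [div_lt_iff₀ hℓ] at hk2
    refine le_trans ?_ (ENNReal.le_tsum (k + 1))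
    have hx : x ∈ Metric.closedBall c (2 ^ (k + 1) * ℓ) := by
      rw [Metric.mem_closedBall, dist_comm, dist_eq_norm]; linarith
    rw [indicator_of_mem hx, ← ENNReal.ofReal_div_of_pos (by positivity)]
    refine ENNReal.ofReal_le_ofReal (kernel_le hε hℓ (k + 1) rfl ?_)
    rw [pow_succ]; linarith
  have hsum : ∑' k, ENNReal.ofReal (q k) = ENNReal.ofReal (dyadicConst d ε) := by
    rw [← ENNReal.ofReal_tsum_of_nonneg hq0
      ((summable_geometric_of_lt_one hρ0 hρ).mul_left _), tsum_mul_left,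
      tsum_geometric_of_lt_one hρ0 hρ, dyadicConst, div_eq_mul_inv]
  calc pivP ε μ a ℓ S
      ≤ ∫⁻ x in S, ∑' k : ℕ, (Metric.closedBall c (2 ^ k * ℓ)).indicator
        (fun _ => ENNReal.ofReal (q k) / ENNReal.ofReal ((2 ^ k * ℓ) ^ d)) x ∂μ :=
        lintegral_mono hpt
    _ = ∑' k : ℕ, ENNReal.ofReal (q k) * (μ (Metric.closedBall c (2 ^ k * ℓ) ∩ S)
          / ENNReal.ofReal ((2 ^ k * ℓ) ^ d)) := by
        rw [lintegral_tsum fun k =>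
          (measurable_const.indicator Metric.isClosed_closedBall.measurableSet).aemeasurable]
        refine tsum_congr fun k => ?_
        rw [lintegral_indicator Metric.isClosed_closedBall.measurableSet, setLIntegral_const,
          Measure.restrict_apply Metric.isClosed_closedBall.measurableSet]
        simp only [div_eq_mul_inv]; ring
    _ ≤ ∑' k : ℕ, ENNReal.ofReal (q k) *
          ⨆ k : ℕ, μ (Metric.closedBall c (2 ^ k * ℓ) ∩ S) / ENNReal.ofReal ((2 ^ k * ℓ) ^ d) :=
        ENNReal.tsum_le_tsum fun k => by
          gcongr
          exact le_iSup (fun k : ℕ => μ (Metric.closedBall c (2 ^ k * ℓ) ∩ S)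
            / ENNReal.ofReal ((2 ^ k * ℓ) ^ d)) k
    _ = _ := by rw [ENNReal.tsum_mul_right, hsum]

/-! ### Averages of the weights -/

lemma cubeAvg_nonneg {d : ℕ} {u : Rd d → ℝ} (hu : ∀ x, 0 < u x) (a : Rd d) {ℓ : ℝ}
    (hℓ : 0 ≤ ℓ) : 0 ≤ cubeAvg u a ℓ :=
  div_nonneg (integral_nonneg fun x => (hu x).le) (by positivity)

lemma withDensity_cube {d : ℕ} {u : Rd d → ℝ} (hu : ∀ x, 0 < u x)
    (hui : LocallyIntegrable u volume) (a : Rd d) {ℓ : ℝ} (hℓ : 0 < ℓ) :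
    volume.withDensity (fun x => ENNReal.ofReal (u x)) (cube a ℓ)
      = ENNReal.ofReal (cubeAvg u a ℓ * ℓ ^ d) := by
  have hK : IsCompact (cube a ℓ) := by rw [cube_eq_Icc]; exact isCompact_Icc
  rw [withDensity_apply _ hK.measurableSet, cubeAvg, div_mul_cancel₀ _ (by positivity),
    ofReal_integral_eq_lintegral_ofReal (hui.integrableOn_isCompact hK)
      (Filter.Eventually.of_forall fun x => (hu x).le)]

/-- A ball of radius `2 r` centred in a cube of side `ℓ ≥ r` contains a cube of side `r` inside
the large one. -/
lemma ofReal_pow_le_volume {d : ℕ} {a x : Rd d} {ℓ r : ℝ} (hr : 0 ≤ r) (hrℓ : r ≤ ℓ)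
    (hx : x ∈ cube a ℓ) :
    ENNReal.ofReal (r ^ d) ≤ volume (Metric.closedBall x (2 * r) ∩ cube a ℓ) := by
  have hsub : Icc (fun i => min (x i) (a i + ℓ - r)) (fun i => min (x i) (a i + ℓ - r) + r)
      ⊆ Metric.closedBall x (2 * r) ∩ cube a ℓ := by
    rw [closedBall_eq_cube x (by positivity)]
    rintro y ⟨hy1, hy2⟩
    have key : ∀ i, (x i - 2 * r ≤ y i ∧ y i ≤ x i - 2 * r + 2 * (2 * r)) ∧
        (a i ≤ y i ∧ y i ≤ a i + ℓ) := by
      intro i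
      have h1 := hy1 i
      have h2 := hy2 i
      have h3 := hx i
      simp only at h1 h2
      rcases min_cases (x i) (a i + ℓ - r) with ⟨h, h'⟩ | ⟨h, h'⟩ <;> rw [h] at h1 h2 <;>
        refine ⟨⟨?_, ?_⟩, ?_, ?_⟩ <;> linarith
    exact ⟨fun i => (key i).1, fun i => (key i).2⟩
  refine le_trans (le_of_eq ?_) (measure_mono hsub)
  rw [Real.volume_Icc_pi]
  simp [ENNReal.ofReal_pow hr]

/-- The passage from `μ`-averages to `ν`-averages: if `t` is at most the average of
`μ = w⁻¹ dx` over `S` and a dilate of the cube `b + [0, s]^d`, then at each `x` of that cube the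
`A₂` condition bounds `t` by `16 ^ d * Q` times `|B ∩ I| / ν(B)` for a ball `B` centred at `x`, and
`|B ∩ I| / ν(B)` is the `ν`-average over `B` of `w⁻¹ χ_I`. -/
lemma local_estimate {d : ℕ} {w : Rd d → ℝ} {Q : ℝ} (hw : ∀ x, 0 < w x) (hQ : 0 ≤ Q)
    (hwi : LocallyIntegrable w volume) (hwi' : LocallyIntegrable (fun x => (w x)⁻¹) volume)
    (hA2 : ∀ a ℓ, 0 < ℓ → cubeAvg w a ℓ * cubeAvg (fun x => (w x)⁻¹) a ℓ ≤ Q)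
    {a x b : Rd d} {ℓ s t : ℝ} (hℓ : 0 < ℓ) (hs : 0 < s) (k : ℕ)
    (hx : x ∈ openCube b s) (hsub : openCube b s ⊆ cube a ℓ) {S : Set (Rd d)} (hS : S ⊆ cube a ℓ)
    (ht : ENNReal.ofReal t ≤ volume.withDensity (fun x => ENNReal.ofReal (w x)⁻¹)
      (Metric.closedBall (fun i => b i + s / 2) (2 ^ k * s) ∩ S)
        / ENNReal.ofReal ((2 ^ k * s) ^ d)) :
    ∃ r, 0 < r ∧ r ≤ 2 * ℓ ∧
      ENNReal.ofReal t * volume.withDensity (fun x => ENNReal.ofReal (w x)) (Metric.closedBall x r)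
        ≤ ENNReal.ofReal (16 ^ d * Q) * volume (Metric.closedBall x r ∩ cube a ℓ) := by
  set μ := volume.withDensity (fun x => ENNReal.ofReal (w x)⁻¹) with hμ
  set ν := volume.withDensity (fun x => ENNReal.ofReal (w x)) with hν
  -- Capping the radius at `ℓ` loses no part of `S`, and makes `B ∩ I` comparable to `B`.
  set r := min (2 ^ k * s) ℓ with hr
  have hr0 : 0 < r := lt_min (by positivity) hℓ
  have hrℓ : r ≤ ℓ := min_le_right _ _
  have hrk : r ≤ 2 ^ k * s := min_le_left _ _
  have h2k : (1 : ℝ) ≤ 2 ^ k := one_le_pow₀ (by norm_num)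
  refine ⟨2 * r, by positivity, by linarith, ?_⟩
  have hxI := hsub hx
  have hball : Metric.closedBall (fun i => b i + s / 2) (2 ^ k * s) ∩ S
      ⊆ Metric.closedBall x (2 * r) := by
    rintro y ⟨hy, hyS⟩
    have hyI := hS hyS
    rw [Metric.mem_closedBall, dist_pi_le_iff (by positivity)] at hy ⊢
    intro i
    have h1 := hy i
    have h2 := hyI i
    have h3 := hxI i
    have h4 := hx i
    rw [Real.dist_eq, abs_le] at h1 ⊢
    rcases min_cases (2 ^ k * s) ℓ with ⟨h, h'⟩ | ⟨h, h'⟩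
    · rw [hr, h]
      have : s ≤ 2 ^ k * s := le_mul_of_one_le_left hs.le h2k
      constructor <;> linarith [h1.1, h1.2]
    · rw [hr, h]; constructor <;> linarith
  have hrd : 0 < r ^ d := by positivity
  have hrd0 : ENNReal.ofReal (r ^ d) ≠ 0 := by simpa using hrd
  have hμB : ENNReal.ofReal t * ENNReal.ofReal (r ^ d) ≤ μ (Metric.closedBall x (2 * r)) := by
    have hkd : 0 < (2 ^ k * s) ^ d := by positivity
    calc ENNReal.ofReal t * ENNReal.ofReal (r ^ d)
        ≤ ENNReal.ofReal t * ENNReal.ofReal ((2 ^ k * s) ^ d) := by gcongr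
      _ ≤ μ (Metric.closedBall (fun i => b i + s / 2) (2 ^ k * s) ∩ S) :=
          (ENNReal.le_div_iff_mul_le (Or.inl (by simpa using hkd))
            (Or.inl ENNReal.ofReal_ne_top)).1 ht
      _ ≤ _ := measure_mono hball
  have hA : ν (Metric.closedBall x (2 * r)) * μ (Metric.closedBall x (2 * r))
      ≤ ENNReal.ofReal (16 ^ d * Q) * ENNReal.ofReal (r ^ d) * ENNReal.ofReal (r ^ d) := by
    have h0 : 0 < 2 * (2 * r) := by positivity
    rw [closedBall_eq_cube x (by positivity), hν, hμ, withDensity_cube hw hwi _ h0,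
      withDensity_cube (fun x => inv_pos.2 (hw x)) hwi' _ h0,
      ← ENNReal.ofReal_mul (mul_nonneg (cubeAvg_nonneg hw _ h0.le) (by positivity)),
      ← ENNReal.ofReal_mul (by positivity), ← ENNReal.ofReal_mul (by positivity)]
    refine ENNReal.ofReal_le_ofReal ?_
    have h16 : (2 * (2 * r)) ^ d * (2 * (2 * r)) ^ d = 16 ^ d * r ^ d * r ^ d := by
      rw [← mul_pow, ← mul_pow, ← mul_pow]; congr 1; ring
    have := mul_le_mul_of_nonneg_right (hA2 (fun i => x i - 2 * r) _ h0)
      (show 0 ≤ (2 * (2 * r)) ^ d * (2 * (2 * r)) ^ d by positivity)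
    calc _ = _ := by ring
      _ ≤ _ := this
      _ = _ := by rw [h16]; ring
  have hfin : ENNReal.ofReal t * ν (Metric.closedBall x (2 * r))
      ≤ ENNReal.ofReal (16 ^ d * Q) * ENNReal.ofReal (r ^ d) := by
    refine (ENNReal.mul_le_mul_iff_left hrd0 ENNReal.ofReal_ne_top).1 ?_
    calc ENNReal.ofReal t * ν (Metric.closedBall x (2 * r)) * ENNReal.ofReal (r ^ d)
        = ν (Metric.closedBall x (2 * r)) * (ENNReal.ofReal t * ENNReal.ofReal (r ^ d)) := by ring
      _ ≤ ν (Metric.closedBall x (2 * r)) * μ (Metric.closedBall x (2 * r)) := by gcongr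
      _ ≤ _ := hA
  refine hfin.trans ?_
  gcongr
  exact ofReal_pow_le_volume hr0.le hrℓ hxI

/-! ### The pivotal condition -/

/-- For `w ∈ A₂`, `dμ = w⁻¹ dx`, `dν = w dx`, the pivotal condition holds with constant
`c [w]_{A₂}²`: for any cube `I` and disjoint open subcubes `I_α ⊆ I`,
`∑_α 𝒫_{I_α}(χ_{I∖I_α} dμ)² ν(I_α) ≤ c [w]_{A₂}² μ(I)`. -/
theorem stmt4 {d : ℕ} (hd : 0 < d) (ε : ℝ) (hε : 0 < ε) :
    ∃ c : ℝ, 0 < c ∧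
      ∀ (w : Rd d → ℝ) (Q : ℝ), (∀ x, 0 < w x) → Measurable w → 0 ≤ Q →
        LocallyIntegrable w volume → LocallyIntegrable (fun x => (w x)⁻¹) volume →
        (∀ a ℓ, 0 < ℓ → cubeAvg w a ℓ * cubeAvg (fun x => (w x)⁻¹) a ℓ ≤ Q) →
        ∀ (a : Rd d) (ℓ : ℝ), 0 < ℓ →
        ∀ (ι : Type) (aα : ι → Rd d) (ℓα : ι → ℝ),
          (∀ i, 0 < ℓα i) →
          (∀ i, openCube (aα i) (ℓα i) ⊆ cube a ℓ) →
          (Pairwise fun i j => Disjoint (openCube (aα i) (ℓα i)) (openCube (aα j) (ℓα j))) →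
          (∑' i, (pivP ε (volume.withDensity fun x => ENNReal.ofReal (w x)⁻¹)
                    (aα i) (ℓα i) (cube a ℓ \ openCube (aα i) (ℓα i))) ^ 2
                  * (volume.withDensity fun x => ENNReal.ofReal (w x)) (openCube (aα i) (ℓα i)))
            ≤ ENNReal.ofReal (c * Q ^ 2)
                * (volume.withDensity fun x => ENNReal.ofReal (w x)⁻¹) (cube a ℓ) := by
  obtain ⟨N, τ, hτ, hN⟩ := HasBesicovitchCovering.no_satelliteConfig (α := Rd d)
  have hD := dyadicConst_pos (d := d) hε
  refine ⟨dyadicConst d ε ^ 2 * (8 * (N + 1) * (16 ^ d) ^ 2), by positivity, ?_⟩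
  intro w Q hw hwm hQ hwi hwi' hA2 a ℓ hℓ ι b s hs hsub hdisj
  set μ := volume.withDensity (fun x => ENNReal.ofReal (w x)⁻¹) with hμ
  set ν := volume.withDensity (fun x => ENNReal.ofReal (w x)) with hν
  have hI : MeasurableSet (cube a ℓ) := by rw [cube_eq_Icc]; exact measurableSet_Icc
  have hμI : μ (cube a ℓ) ≠ ∞ := by
    rw [hμ, withDensity_cube (fun x => inv_pos.2 (hw x)) hwi' a hℓ]
    exact ENNReal.ofReal_ne_top
  have hνB : ∀ x r, ν (Metric.closedBall x r) ≠ ∞ := by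
    intro x r
    have hr : (0 : ℝ) < |r| + 1 := by positivity
    refine ne_top_of_le_ne_top ?_ (measure_mono
      (Metric.closedBall_subset_closedBall (show r ≤ |r| + 1 by linarith [le_abs_self r])))
    rw [closedBall_eq_cube x hr.le, hν, withDensity_cube hw hwi _ (by positivity)]
    exact ENNReal.ofReal_ne_top
  set M : ι → ℝ≥0∞ := fun i => ⨆ k : ℕ,
    μ (Metric.closedBall (fun j => b i j + s i / 2) (2 ^ k * s i) ∩
        (cube a ℓ \ openCube (b i) (s i))) / ENNReal.ofReal ((2 ^ k * s i) ^ d) with hM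
  have hMtop : ∀ i, M i ≠ ∞ := by
    intro i
    have hsd : 0 < s i ^ d := pow_pos (hs i) d
    refine ne_top_of_le_ne_top (b := μ (cube a ℓ) / ENNReal.ofReal (s i ^ d))
      (ENNReal.div_ne_top hμI (by simpa using hsd)) (iSup_le fun k => ?_)
    have : s i ≤ 2 ^ k * s i := le_mul_of_one_le_left (hs i).le (one_le_pow₀ (by norm_num))
    have := (hs i).le
    gcongr
    exact inter_subset_right.trans sdiff_subset
  -- `F` is a multiple of `χ_I w⁻¹`, as a function in `L²(ν)`.
  set K : ℝ≥0∞ := ENNReal.ofReal (16 ^ d * Q) with hK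
  set F : Rd d → ℝ≥0∞ := (cube a ℓ).indicator fun x => K * ENNReal.ofReal (w x)⁻¹ with hF
  have hFm : Measurable F := by
    refine Measurable.indicator ?_ hI
    fun_prop
  have hcancel : ∀ x, ENNReal.ofReal (w x) * ENNReal.ofReal (w x)⁻¹ = 1 := by
    intro x
    rw [← ENNReal.ofReal_mul (hw x).le, mul_inv_cancel₀ (hw x).ne', ENNReal.ofReal_one]
  have hFB : ∀ x r, ∫⁻ y in Metric.closedBall x r, F y ∂ν
      = K * volume (Metric.closedBall x r ∩ cube a ℓ) := by
    intro x r
    rw [hν, setLIntegral_withDensity_eq_setLIntegral_mul _ (by fun_prop) hFm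
      Metric.isClosed_closedBall.measurableSet]
    have : (fun y => ENNReal.ofReal (w y)) * F = (cube a ℓ).indicator fun _ => K := by
      ext y
      by_cases hy : y ∈ cube a ℓ
      · simp only [Pi.mul_apply, hF, indicator_of_mem hy]
        rw [mul_left_comm, hcancel, mul_one]
      · simp [hF, hy]
    rw [this, lintegral_indicator hI, setLIntegral_const, Measure.restrict_apply hI, inter_comm]
  have hF2 : ∫⁻ y, F y ^ 2 ∂ν = K ^ 2 * μ (cube a ℓ) := by
    rw [hν, lintegral_withDensity_eq_lintegral_mul _ (by fun_prop) (hFm.pow_const 2)]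
    have : ((fun y => ENNReal.ofReal (w y)) * fun y => F y ^ 2)
        = (cube a ℓ).indicator fun y => K ^ 2 * ENNReal.ofReal (w y)⁻¹ := by
      ext y
      by_cases hy : y ∈ cube a ℓ
      · simp only [Pi.mul_apply, hF, indicator_of_mem hy]
        calc _ = K ^ 2 * ENNReal.ofReal (w y)⁻¹ *
              (ENNReal.ofReal (w y) * ENNReal.ofReal (w y)⁻¹) := by ring
          _ = _ := by rw [hcancel, mul_one]
      · simp [hF, hy]
    rw [this, lintegral_indicator hI, lintegral_const_mul _ (by fun_prop), hμ,
      withDensity_apply _ hI]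
  rw [ENNReal.tsum_eq_iSup_sum]
  refine iSup_le fun T => ?_
  have hstrong := strong_type hτ hN ν hνB F hFm T (fun i => openCube (b i) (s i))
    (fun i => (isOpen_openCube _ _).measurableSet) hdisj (fun i => (M i).toReal)
    (fun i => ENNReal.toReal_nonneg) (2 * ℓ) (by
      intro i t ht0 ht x hx
      have ht' : ENNReal.ofReal t < M i := (ENNReal.ofReal_lt_iff_lt_toReal ht0.le (hMtop i)).2 ht
      obtain ⟨k, hk⟩ := lt_iSup_iff.1 ht'
      simp only [hFB]
      exact local_estimate hw hQ hwi hwi' hA2 hℓ (hs i) k hx (hsub i) sdiff_subset hk.le)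
  simp only [ENNReal.ofReal_toReal (hMtop _), hF2] at hstrong
  calc ∑ i ∈ T, pivP ε μ (b i) (s i) (cube a ℓ \ openCube (b i) (s i)) ^ 2
        * ν (openCube (b i) (s i))
      ≤ ∑ i ∈ T, ENNReal.ofReal (dyadicConst d ε) ^ 2 * (M i ^ 2 * ν (openCube (b i) (s i))) := by
        refine Finset.sum_le_sum fun i _ => ?_
        rw [← mul_assoc, ← mul_pow]
        gcongr
        exact pivP_le_iSup hε μ (b i) (hs i) _
    _ ≤ ENNReal.ofReal (dyadicConst d ε) ^ 2 * (8 * N * (K ^ 2 * μ (cube a ℓ))) := by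
        rw [← Finset.mul_sum]; gcongr
    _ ≤ ENNReal.ofReal (dyadicConst d ε) ^ 2 * (8 * (N + 1) * (K ^ 2 * μ (cube a ℓ))) := by
        gcongr; exact le_self_add
    _ = _ := by
        have h8 : (8 * (N + 1) : ℝ≥0∞) = ENNReal.ofReal (8 * (N + 1)) := by
          rw [ENNReal.ofReal_mul (by norm_num), ENNReal.ofReal_add (by positivity) (by norm_num)]
          simp
        rw [hK, h8, ← ENNReal.ofReal_pow hD.le, ← ENNReal.ofReal_pow (by positivity), ← mul_assoc,
          ← mul_assoc, ← ENNReal.ofReal_mul (by positivity), ← ENNReal.ofReal_mul (by positivity)]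
        congr 2
        ring
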